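/- Multidimensional Laplace asymptotics at a nondegenerate minimum: Let V : ℝ^d → ℝ be twice continuously differentiable with a unique global minimizer m, at which the Hessian ∇²V(m) is positive definite. Assume lim inf_{|x|→∞} V(x) > V(m), that inf_{|x−m|≥r} V(x) > V(m) for every r > 0, and that ∫_{ℝ^d} e^{−V(x)/a₀} dx < ∞ for some a₀ > 0. Then lim_{a↓0} (2πa)^{−d/2} ∫_{ℝ^d} e^{−(V(x)−V(m))/a} dx = (det ∇²V(m))^{−1/2}. -/

import Mathlib

open MeasureTheory Filter Topology Real

/-- The Hessian matrix of `V : ℝ^d → ℝ` at a point `m`, i.e. the matrix of the second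
derivative bilinear form in the standard basis. -/
noncomputable def hessianMatrix {d : ℕ} (V : EuclideanSpace ℝ (Fin d) → ℝ)
    (m : EuclideanSpace ℝ (Fin d)) : Matrix (Fin d) (Fin d) ℝ :=
  fun i j => fderiv ℝ (fderiv ℝ V) m (EuclideanSpace.single i 1) (EuclideanSpace.single j 1)

/-!
Split the integral at a small ball around `m`. In the ball substitute `x = m + √a • y`: by Taylor's
formula the exponent `-(V x - V m) / a` tends to `-V''(m)(y, y) / 2`, and since `V''(m)` is coercive
it is at most `-c * ‖y‖ ^ 2`, so dominated convergence yields the Gaussian integral of `V''(m)`,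
which a factorization `M = Aᵀ * A` of the Hessian reduces to a power of the one-dimensional one.
Outside the ball `V - V m ≥ δ > 0`, and comparison with the exponent at `a₀` bounds the integral by
a multiple of `exp (-δ / a)`, which decays faster than any power of `a`.
-/

open Module Metric Asymptotics
open scoped Matrix

section Taylor

variable {E F : Type*} [NormedAddCommGroup E] [NormedSpace ℝ E] [NormedAddCommGroup F]
  [NormedSpace ℝ F] {f : E → F} {f' : E → E →L[ℝ] F} {f'' : E →L[ℝ] E →L[ℝ] F} {x : E}

lemma isLittleO_sub_taylor_two (hf : ∀ᶠ y in 𝓝 x, HasFDerivAt f (f' y) y)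
    (hf' : HasFDerivAt f' f'' x) :
    (fun y => f y - f x - f' x (y - x) - (2⁻¹ : ℝ) • f'' (y - x) (y - x)) =o[𝓝 x]
      fun y => ‖y - x‖ ^ 2 := by
  obtain ⟨r, hr, hfr⟩ := eventually_nhds_iff_ball.1 hf
  have symm : ∀ v w, f'' v w = f'' w v := second_derivative_symmetric_of_eventually hf hf'
  have hasFDerivAt_remainder : ∀ y ∈ ball x r,
      HasFDerivAt (fun y => f y - f' x (y - x) - (2⁻¹ : ℝ) • f'' (y - x) (y - x))
        (f' y - f' x - f'' (y - x)) y := fun y hy => by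
    have hid : HasFDerivAt (fun y => y - x) (.id ℝ E) y := (hasFDerivAt_id y).sub_const x
    have hlin := (f' x).hasFDerivAt.comp y hid
    have hquad := ((f''.hasFDerivAt.comp y hid).clm_apply hid).const_smul (2⁻¹ : ℝ)
    refine (((hfr y hy).sub hlin).sub hquad).congr_fderiv ?_
    ext w
    suffices (2⁻¹ : ℝ) • (f'' (y - x) w + f'' w (y - x)) = f'' (y - x) w by simpa using this
    rw [symm w, ← two_smul ℝ, inv_smul_smul₀ two_ne_zero]
  have key := (convex_ball x r).isLittleO_pow_succ (n := 1) (mem_ball_self hr)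
    (fun y hy => (hasFDerivAt_remainder y hy).hasFDerivWithinAt)
    (by simpa using (hf'.isLittleO.norm_right).mono nhdsWithin_le_nhds)
  rw [isOpen_ball.nhdsWithin_eq (mem_ball_self hr)] at key
  refine key.congr_left fun y => ?_
  simp only [sub_self, map_zero, smul_zero, sub_zero]
  abel

end Taylor

/-- The matrix of the bilinear form `B` in the basis `b`. It plays the role of
`LinearMap.toMatrix₂ b b` for continuous bilinear forms, the shape in which second derivatives
come. -/
noncomputable def formMatrix {ι E : Type*} [NormedAddCommGroup E] [NormedSpace ℝ E]
    (b : Basis ι ℝ E) (B : E →L[ℝ] E →L[ℝ] ℝ) : Matrix ι ι ℝ :=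
  .of fun i j => B (b i) (b j)

section QuadraticForm

variable {E : Type*} [NormedAddCommGroup E] [NormedSpace ℝ E] {B : E →L[ℝ] E →L[ℝ] ℝ}

lemma apply_self_eq_dotProduct_formMatrix_mulVec {ι : Type*} [Fintype ι] (b : Basis ι ℝ E)
    (B : E →L[ℝ] E →L[ℝ] ℝ) (y : E) :
    B y y = b.equivFun y ⬝ᵥ formMatrix b B *ᵥ b.equivFun y := by
  conv_lhs => rw [← b.sum_equivFun y]
  simp only [map_sum, map_smul, sum_apply, smul_apply, dotProduct, Matrix.mulVec, formMatrix,
    Matrix.of_apply, smul_eq_mul, Finset.mul_sum]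
  rw [Finset.sum_comm]
  exact Finset.sum_congr rfl fun i _ => Finset.sum_congr rfl fun j _ => by ring

lemma isCoercive_of_pos [FiniteDimensional ℝ E] (hB : ∀ y, y ≠ 0 → 0 < B y y) : IsCoercive B := by
  rcases subsingleton_or_nontrivial E with hE | hE
  · exact ⟨1, one_pos, fun y => by simp [Subsingleton.elim y 0]⟩
  have : ProperSpace E := FiniteDimensional.proper ℝ E
  obtain ⟨z, hz, hmin⟩ := (isCompact_sphere (0 : E) 1).exists_isMinOn
    (NormedSpace.sphere_nonempty.2 zero_le_one)
    (by fun_prop : Continuous fun y => B y y).continuousOn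
  refine ⟨B z z, hB z (ne_zero_of_mem_unit_sphere ⟨z, hz⟩), fun y => ?_⟩
  rcases eq_or_ne y 0 with rfl | hy
  · simp
  have hunit : ‖y‖⁻¹ • y ∈ sphere (0 : E) 1 := by simp [norm_smul, hy]
  have hle : B z z ≤ B (‖y‖⁻¹ • y) (‖y‖⁻¹ • y) := hmin hunit
  have hy0 : ‖y‖ ≠ 0 := norm_ne_zero_iff.2 hy
  calc B z z * ‖y‖ * ‖y‖ ≤ B (‖y‖⁻¹ • y) (‖y‖⁻¹ • y) * ‖y‖ * ‖y‖ := by gcongr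
    _ = B y y := by
      simp only [map_smul, smul_apply, smul_eq_mul]
      field_simp

lemma isCoercive_of_posDef_formMatrix {ι : Type*} [Finite ι] (b : Basis ι ℝ E)
    (hB : (formMatrix b B).PosDef) : IsCoercive B := by
  have : FiniteDimensional ℝ E := b.finiteDimensional_of_finite
  cases nonempty_fintype ι
  refine isCoercive_of_pos fun y hy => ?_
  rw [apply_self_eq_dotProduct_formMatrix_mulVec b B]
  simpa using hB.dotProduct_mulVec_pos (b.equivFun.map_ne_zero_iff.2 hy)

end QuadraticForm

section Gaussian

variable {ι : Type*} [Fintype ι]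

lemma integral_exp_neg_half_dotProduct_self :
    ∫ x : ι → ℝ, exp (-(x ⬝ᵥ x) / 2) = √(2 * π) ^ Fintype.card ι := by
  calc ∫ x : ι → ℝ, exp (-(x ⬝ᵥ x) / 2)
      = ∫ x : ι → ℝ, ∏ i, exp (-(1 / 2) * x i ^ 2) := by
        congr with x
        rw [← exp_sum, ← Finset.mul_sum, dotProduct]
        simp only [← pow_two]
        ring_nf
    _ = √(2 * π) ^ Fintype.card ι := by
        rw [integral_fintype_prod_volume_eq_pow (fun t : ℝ => exp (-(1 / 2) * t ^ 2)),
          integral_gaussian]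
        ring_nf

open scoped MatrixOrder in
lemma integral_exp_neg_half_dotProduct_mulVec [DecidableEq ι] {M : Matrix ι ι ℝ} (hM : M.PosDef) :
    ∫ x : ι → ℝ, exp (-(x ⬝ᵥ M *ᵥ x) / 2) = √(2 * π) ^ Fintype.card ι * (√M.det)⁻¹ := by
  obtain ⟨A, hA⟩ : ∃ A : Matrix ι ι ℝ, M = Aᵀ * A :=
    CStarAlgebra.nonneg_iff_eq_star_mul_self.1 hM.posSemidef.nonneg
  have hdet : M.det = A.det * A.det := by rw [hA, Matrix.det_mul, Matrix.det_transpose]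
  have hA0 : A.det ≠ 0 := fun h => hM.det_pos.ne' (by rw [hdet, h, mul_zero])
  have hquad (x : ι → ℝ) : x ⬝ᵥ M *ᵥ x = A.toLin' x ⬝ᵥ A.toLin' x := by
    rw [hA, Matrix.toLin'_apply, ← Matrix.mulVec_mulVec, Matrix.dotProduct_mulVec,
      Matrix.vecMul_transpose]
  simp_rw [hquad]
  rw [← integral_map (φ := A.toLin') (f := fun y => exp (-(y ⬝ᵥ y) / 2))
      A.toLin'.continuous_of_finiteDimensional.aemeasurable (by fun_prop),
    Real.map_matrix_volume_pi_eq_smul_volume_pi hA0, integral_smul_measure,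
    ENNReal.toReal_ofReal (abs_nonneg _), integral_exp_neg_half_dotProduct_self, hdet,
    sqrt_mul_self_eq_abs, abs_inv, smul_eq_mul, mul_comm]

variable {E : Type*} [NormedAddCommGroup E] [NormedSpace ℝ E] [MeasurableSpace E] [BorelSpace E]

lemma map_equivFunL_addHaar (b : Basis ι ℝ E) : b.addHaar.map b.equivFunL = volume := by
  have hb : b.map b.equivFunL.toLinearEquiv = Pi.basisFun ℝ ι := by
    classical
    refine Basis.eq_of_apply_eq fun i => ?_
    ext j
    simp [Finsupp.single_apply, Pi.single_apply, eq_comm]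
  rw [Basis.map_addHaar, hb, Basis.addHaar, Basis.parallelepiped_basisFun,
    addHaarMeasure_eq_volume_pi]

lemma integral_addHaar_exp_neg_half_apply_self [DecidableEq ι] (b : Basis ι ℝ E)
    {B : E →L[ℝ] E →L[ℝ] ℝ} (hB : (formMatrix b B).PosDef) :
    ∫ y, exp (-B y y / 2) ∂b.addHaar =
      √(2 * π) ^ Fintype.card ι * (√(formMatrix b B).det)⁻¹ := by
  simp_rw [apply_self_eq_dotProduct_formMatrix_mulVec b B]
  rw [← integral_exp_neg_half_dotProduct_mulVec hB, ← map_equivFunL_addHaar b,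
    integral_map b.equivFunL.continuous.aemeasurable (by fun_prop)]
  rfl

lemma integrable_exp_neg_mul_sq_norm [FiniteDimensional ℝ E] (μ : Measure E) [μ.IsAddHaarMeasure]
    {c : ℝ} (hc : 0 < c) : Integrable (fun y => exp (-c * ‖y‖ ^ 2)) μ := by
  rcases subsingleton_or_nontrivial E with hE | hE
  · have : CompactSpace E := Finite.compactSpace
    exact (by fun_prop : Continuous _).integrable_of_hasCompactSupport
      (HasCompactSupport.of_compactSpace _)
  · refine (integrable_fun_norm_addHaar μ (f := fun t => exp (-c * t ^ 2))).2 ?_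
    have h := integrableOn_rpow_mul_exp_neg_mul_sq hc (s := (finrank ℝ E - 1 : ℕ))
      (by linarith [Nat.cast_nonneg (α := ℝ) (finrank ℝ E - 1)])
    simpa only [rpow_natCast, smul_eq_mul] using h

end Gaussian

/-- The value `f m` is exceeded by a uniform margin outside every ball around `m`, that is,
`inf_{dist x m ≥ r} f x > f m` for all `r > 0`. The infimum is replaced by a lower bound `c`,
because `⨅` is a junk value on an empty or unbounded family of reals. -/
def IsWellSeparatedMin {X : Type*} [PseudoMetricSpace X] (f : X → ℝ) (m : X) : Prop :=
  ∀ r : ℝ, 0 < r → ∃ c : ℝ, f m < c ∧ ∀ x, r ≤ dist x m → c ≤ f x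

lemma IsWellSeparatedMin.le {X : Type*} [MetricSpace X] {f : X → ℝ} {m : X}
    (hf : IsWellSeparatedMin f m) (x : X) : f m ≤ f x := by
  rcases eq_or_ne x m with rfl | hx
  · exact le_rfl
  · obtain ⟨c, hmc, hc⟩ := hf (dist x m) (dist_pos.2 hx)
    exact hmc.le.trans (hc x le_rfl)

section BoltzmannWeight

variable {α : Type*} [MeasurableSpace α] {μ : Measure α} {f : α → ℝ} {a a₀ : ℝ}

lemma aemeasurable_of_integrable_exp_neg_div (ha₀ : a₀ ≠ 0)
    (hint : Integrable (fun x => exp (-f x / a₀)) μ) : AEMeasurable f μ := by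
  have h := (aemeasurable_of_aemeasurable_exp hint.aemeasurable).const_mul (-a₀)
  refine h.congr (.of_forall fun x => ?_)
  field_simp

lemma integrable_exp_neg_div_of_le (hf : ∀ x, 0 ≤ f x) (ha : 0 < a) (haa₀ : a ≤ a₀)
    (hint : Integrable (fun x => exp (-f x / a₀)) μ) :
    Integrable (fun x => exp (-f x / a)) μ := by
  have hmeas := aemeasurable_of_integrable_exp_neg_div (ha.trans_le haa₀).ne' hint
  refine hint.mono' (by fun_prop) (.of_forall fun x => ?_)
  rw [norm_of_nonneg (exp_nonneg _), neg_div, neg_div]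
  gcongr
  exact hf x

/-- On `S` the exponent `-f / a` is at most `-f / a₀ - δ * (a⁻¹ - a₀⁻¹)`. -/
lemma setIntegral_exp_neg_div_le {S : Set α} (hS : MeasurableSet S) {δ : ℝ}
    (hf : ∀ x ∈ S, δ ≤ f x) (ha : 0 < a) (haa₀ : a ≤ a₀)
    (hint : IntegrableOn (fun x => exp (-f x / a₀)) S μ) :
    ∫ x in S, exp (-f x / a) ∂μ ≤
      exp (-δ * a⁻¹) * (exp (δ * a₀⁻¹) * ∫ x in S, exp (-f x / a₀) ∂μ) := by
  rw [← mul_assoc, ← integral_const_mul]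
  refine integral_mono_of_nonneg (.of_forall fun x => exp_nonneg _) (hint.const_mul _)
    ((ae_restrict_iff' hS).2 (.of_forall fun x hx => ?_))
  have hinv : a₀⁻¹ ≤ a⁻¹ := inv_anti₀ ha haa₀
  have hmul : 0 ≤ (f x - δ) * (a⁻¹ - a₀⁻¹) :=
    mul_nonneg (sub_nonneg.2 (hf x hx)) (sub_nonneg.2 hinv)
  simp only [← exp_add, div_eq_mul_inv]
  exact exp_le_exp.2 (by linarith)

lemma tendsto_inv_sqrt_pow_mul_exp_neg_mul_inv (n : ℕ) {δ : ℝ} (hδ : 0 < δ) :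
    Tendsto (fun a => (√a ^ n)⁻¹ * exp (-δ * a⁻¹)) (𝓝[>] 0) (𝓝 0) := by
  refine ((tendsto_rpow_mul_exp_neg_mul_atTop_nhds_zero (n / 2) δ hδ).comp
    tendsto_inv_nhdsGT_zero).congr' ?_
  filter_upwards [self_mem_nhdsWithin] with a (ha : 0 < a)
  rw [Function.comp_apply, rpow_div_two_eq_sqrt _ (inv_nonneg.2 ha.le), rpow_natCast, sqrt_inv,
    inv_pow]

lemma tendsto_inv_sqrt_pow_mul_setIntegral_exp_neg_div (n : ℕ) {S : Set α}
    (hS : MeasurableSet S) {δ : ℝ} (hδ : 0 < δ) (hf : ∀ x ∈ S, δ ≤ f x) (ha₀ : 0 < a₀)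
    (hint : IntegrableOn (fun x => exp (-f x / a₀)) S μ) :
    Tendsto (fun a => (√a ^ n)⁻¹ * ∫ x in S, exp (-f x / a) ∂μ) (𝓝[>] 0) (𝓝 0) := by
  have hbound := (tendsto_inv_sqrt_pow_mul_exp_neg_mul_inv n hδ).mul_const
    (exp (δ * a₀⁻¹) * ∫ x in S, exp (-f x / a₀) ∂μ)
  rw [zero_mul] at hbound
  refine squeeze_zero' (.of_forall fun a => by positivity) ?_ hbound
  filter_upwards [Ioo_mem_nhdsGT ha₀] with a ⟨ha, haa₀⟩
  rw [mul_assoc]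
  gcongr
  exact setIntegral_exp_neg_div_le hS hf ha haa₀.le hint

end BoltzmannWeight

section Laplace

variable {E : Type*} [NormedAddCommGroup E] [NormedSpace ℝ E] {V : E → ℝ} {m : E}
  {B : E →L[ℝ] E →L[ℝ] ℝ}

lemma exists_eventually_mul_sq_le_sub (hB : IsCoercive B)
    (hVB : (fun x => V x - V m - B (x - m) (x - m) / 2) =o[𝓝 m] fun x => ‖x - m‖ ^ 2) :
    ∃ c > 0, ∀ᶠ x in 𝓝 m, c * ‖x - m‖ ^ 2 ≤ V x - V m := by
  obtain ⟨C, hC, hBC⟩ := hB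
  refine ⟨C / 4, by positivity, (hVB.def (by positivity : 0 < C / 4)).mono fun x hx => ?_⟩
  rw [norm_of_nonneg (by positivity : 0 ≤ ‖x - m‖ ^ 2), norm_eq_abs] at hx
  linarith [neg_le_of_abs_le hx, hBC (x - m), pow_two ‖x - m‖]

lemma tendsto_add_sqrt_smul (m y : E) : Tendsto (fun a : ℝ => m + √a • y) (𝓝[>] 0) (𝓝 m) := by
  have h : Continuous fun a : ℝ => m + √a • y := by fun_prop
  simpa using (h.tendsto 0).mono_left nhdsWithin_le_nhds

lemma tendsto_sub_div_of_isLittleO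
    (hVB : (fun x => V x - V m - B (x - m) (x - m) / 2) =o[𝓝 m] fun x => ‖x - m‖ ^ 2) (y : E) :
    Tendsto (fun a : ℝ => (V (m + √a • y) - V m) / a) (𝓝[>] 0) (𝓝 (B y y / 2)) := by
  have hremainder : (fun a : ℝ => V (m + √a • y) - V m - B (√a • y) (√a • y) / 2)
      =o[𝓝[>] 0] fun a => a := by
    have h := hVB.comp_tendsto (tendsto_add_sqrt_smul m y)
    simp only [Function.comp_def, add_sub_cancel_left] at h
    refine h.trans_isBigO (.of_bound (‖y‖ ^ 2) ?_)
    filter_upwards [self_mem_nhdsWithin] with a (ha : 0 < a)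
    simp [norm_smul, mul_pow, abs_of_pos ha, sq_sqrt ha.le, mul_comm]
  have h := hremainder.tendsto_div_nhds_zero.add_const (B y y / 2)
  rw [zero_add] at h
  refine h.congr' ?_
  filter_upwards [self_mem_nhdsWithin] with a (ha : 0 < a)
  have hscale : B (√a • y) (√a • y) = a * B y y := by
    simp only [map_smul, smul_apply, smul_eq_mul]
    rw [← mul_assoc, mul_self_sqrt ha.le]
  rw [hscale]
  field_simp
  ring

lemma norm_indicator_exp_neg_div_le {S : Set E} {c a : ℝ}
    (hV : ∀ x ∈ S, c * ‖x - m‖ ^ 2 ≤ V x - V m) (ha : 0 < a) (y : E) :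
    ‖S.indicator (fun x => exp (-(V x - V m) / a)) (m + √a • y)‖ ≤ exp (-c * ‖y‖ ^ 2) := by
  by_cases hy : m + √a • y ∈ S
  · have hgrowth := hV _ hy
    rw [add_sub_cancel_left, norm_smul, norm_of_nonneg (sqrt_nonneg a), mul_pow,
      sq_sqrt ha.le] at hgrowth
    rw [Set.indicator_of_mem hy, norm_of_nonneg (exp_nonneg _), exp_le_exp, div_le_iff₀ ha]
    linarith
  · rw [Set.indicator_of_notMem hy, norm_zero]
    positivity

lemma tendsto_indicator_ball_exp_neg_div
    (hVB : (fun x => V x - V m - B (x - m) (x - m) / 2) =o[𝓝 m] fun x => ‖x - m‖ ^ 2)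
    {r : ℝ} (hr : 0 < r) (y : E) :
    Tendsto (fun a : ℝ => (ball m r).indicator (fun x => exp (-(V x - V m) / a)) (m + √a • y))
      (𝓝[>] 0) (𝓝 (exp (-B y y / 2))) := by
  have h := (tendsto_sub_div_of_isLittleO hVB y).neg.rexp
  simp only [← neg_div] at h
  refine h.congr' ?_
  filter_upwards [(tendsto_add_sqrt_smul m y).eventually_mem (ball_mem_nhds m hr)] with a ha
  rw [Set.indicator_of_mem ha]

variable [MeasurableSpace E] [BorelSpace E] [FiniteDimensional ℝ E] {μ : Measure E}
  [μ.IsAddHaarMeasure]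

lemma quasiMeasurePreserving_const_add_smul (m : E) {R : ℝ} (hR : R ≠ 0) :
    Measure.QuasiMeasurePreserving (fun y => m + R • y) μ μ := by
  refine (measurePreserving_add_left μ m).quasiMeasurePreserving.comp
    ⟨measurable_const_smul R, ?_⟩
  rw [Measure.map_addHaar_smul μ hR]
  exact Measure.smul_absolutelyContinuous

lemma integral_comp_const_add_smul (g : E → ℝ) (m : E) {R : ℝ} (hR : 0 ≤ R) :
    ∫ y, g (m + R • y) ∂μ = (R ^ finrank ℝ E)⁻¹ * ∫ x, g x ∂μ := by
  rw [Measure.integral_comp_smul_of_nonneg μ (fun y => g (m + y)) R (hR := hR),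
    integral_add_left_eq_self g m, smul_eq_mul]

lemma tendsto_inv_sqrt_pow_mul_setIntegral_ball (hV : AEMeasurable V μ)
    (hVB : (fun x => V x - V m - B (x - m) (x - m) / 2) =o[𝓝 m] fun x => ‖x - m‖ ^ 2)
    {c r : ℝ} (hc : 0 < c) (hr : 0 < r) (hVc : ∀ x ∈ ball m r, c * ‖x - m‖ ^ 2 ≤ V x - V m) :
    Tendsto (fun a : ℝ => (√a ^ finrank ℝ E)⁻¹ * ∫ x in ball m r, exp (-(V x - V m) / a) ∂μ)
      (𝓝[>] 0) (𝓝 (∫ y, exp (-B y y / 2) ∂μ)) := by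
  have hsubst (a : ℝ) := integral_comp_const_add_smul (μ := μ)
    ((ball m r).indicator fun x => exp (-(V x - V m) / a)) m (sqrt_nonneg a)
  simp only [integral_indicator measurableSet_ball] at hsubst
  simp only [← hsubst]
  refine tendsto_integral_filter_of_dominated_convergence (fun y => exp (-c * ‖y‖ ^ 2)) ?_ ?_
    (integrable_exp_neg_mul_sq_norm μ hc)
    (.of_forall (tendsto_indicator_ball_exp_neg_div hVB hr))
  · filter_upwards [self_mem_nhdsWithin] with a (ha : 0 < a)
    have hmeas : AEStronglyMeasurable (fun x => exp (-(V x - V m) / a)) μ := by fun_prop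
    exact (hmeas.indicator measurableSet_ball).comp_quasiMeasurePreserving
      (quasiMeasurePreserving_const_add_smul m (sqrt_pos.2 ha).ne')
  · filter_upwards [self_mem_nhdsWithin] with a (ha : 0 < a)
    exact .of_forall (norm_indicator_exp_neg_div_le hVc ha)

theorem tendsto_inv_sqrt_pow_mul_integral_exp_neg_div (hB : IsCoercive B)
    (hVB : (fun x => V x - V m - B (x - m) (x - m) / 2) =o[𝓝 m] fun x => ‖x - m‖ ^ 2)
    (hsep : IsWellSeparatedMin V m) {a₀ : ℝ} (ha₀ : 0 < a₀)
    (hint : Integrable (fun x => exp (-V x / a₀)) μ) :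
    Tendsto (fun a : ℝ => (√a ^ finrank ℝ E)⁻¹ * ∫ x, exp (-(V x - V m) / a) ∂μ)
      (𝓝[>] 0) (𝓝 (∫ y, exp (-B y y / 2) ∂μ)) := by
  have hint' : Integrable (fun x => exp (-(V x - V m) / a₀)) μ := by
    refine (hint.const_mul (exp (V m / a₀))).congr (.of_forall fun x => ?_)
    simp only [← exp_add]
    ring_nf
  obtain ⟨c, hc, hgrowth⟩ := exists_eventually_mul_sq_le_sub hB hVB
  obtain ⟨r, hr, hball⟩ := eventually_nhds_iff_ball.1 hgrowth
  obtain ⟨b, hb, hfar⟩ := hsep r hr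
  have hnear := tendsto_inv_sqrt_pow_mul_setIntegral_ball
    (aemeasurable_of_integrable_exp_neg_div ha₀.ne' hint) hVB hc hr hball
  have htail := tendsto_inv_sqrt_pow_mul_setIntegral_exp_neg_div (finrank ℝ E)
    (S := (ball m r)ᶜ) measurableSet_ball.compl (sub_pos.2 hb)
    (fun x hx => sub_le_sub_right (hfar x (by simpa using hx)) (V m)) ha₀ hint'.integrableOn
  have hsum := hnear.add htail
  rw [add_zero] at hsum
  refine hsum.congr' ?_
  filter_upwards [Ioo_mem_nhdsGT ha₀] with a ⟨ha, haa₀⟩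
  rw [← mul_add, integral_add_compl measurableSet_ball
    (integrable_exp_neg_div_of_le (fun x => sub_nonneg.2 (hsep.le x)) ha haa₀.le hint')]

end Laplace

lemma rpow_neg_natCast_div_two {x : ℝ} (hx : 0 ≤ x) (n : ℕ) :
    x ^ (-(n : ℝ) / 2) = (√x ^ n)⁻¹ := by
  rw [rpow_div_two_eq_sqrt _ hx, rpow_neg (sqrt_nonneg x), rpow_natCast]

theorem laplace_asymptotics_general {E ι : Type*} [NormedAddCommGroup E] [NormedSpace ℝ E]
    [MeasurableSpace E] [BorelSpace E] [Fintype ι] [DecidableEq ι] (b : Basis ι ℝ E)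
    {V : E → ℝ} {V' : E → E →L[ℝ] ℝ} {V'' : E →L[ℝ] E →L[ℝ] ℝ} {m : E}
    (hV' : ∀ᶠ x in 𝓝 m, HasFDerivAt V (V' x) x) (hV'' : HasFDerivAt V' V'' m)
    (hposdef : (formMatrix b V'').PosDef) (hsep : IsWellSeparatedMin V m) {a₀ : ℝ} (ha₀ : 0 < a₀)
    (hint : Integrable (fun x => exp (-V x / a₀)) b.addHaar) :
    Tendsto
      (fun a : ℝ => (2 * π * a) ^ (-(Fintype.card ι : ℝ) / 2) *
        ∫ x, exp (-(V x - V m) / a) ∂b.addHaar)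
      (𝓝[>] 0) (𝓝 (√(formMatrix b V'').det)⁻¹) := by
  have : FiniteDimensional ℝ E := b.finiteDimensional_of_finite
  have hcrit : V' m = 0 :=
    IsLocalMin.hasFDerivAt_eq_zero (.of_forall hsep.le) hV'.self_of_nhds
  have htaylor : (fun x => V x - V m - V'' (x - m) (x - m) / 2) =o[𝓝 m] fun x => ‖x - m‖ ^ 2 :=
    (isLittleO_sub_taylor_two hV' hV'').congr_left fun x => by
      rw [hcrit, zero_apply, sub_zero, smul_eq_mul, inv_mul_eq_div]
  have h := (tendsto_inv_sqrt_pow_mul_integral_exp_neg_div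
    (isCoercive_of_posDef_formMatrix b hposdef) htaylor hsep ha₀ hint).const_mul
      (√(2 * π) ^ Fintype.card ι)⁻¹
  rw [integral_addHaar_exp_neg_half_apply_self b hposdef,
    inv_mul_cancel_left₀ (by positivity), finrank_eq_card_basis b] at h
  refine h.congr' ?_
  filter_upwards [self_mem_nhdsWithin] with a (ha : 0 < a)
  rw [rpow_neg_natCast_div_two (by positivity), sqrt_mul (x := 2 * π) (by positivity) a, mul_pow,
    mul_inv, mul_assoc]

lemma formMatrix_basisFun_fderiv_fderiv {d : ℕ} (V : EuclideanSpace ℝ (Fin d) → ℝ)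
    (m : EuclideanSpace ℝ (Fin d)) :
    formMatrix (EuclideanSpace.basisFun (Fin d) ℝ).toBasis (fderiv ℝ (fderiv ℝ V) m) =
      hessianMatrix V m := by
  ext i j
  simp [formMatrix, hessianMatrix]

/-- **Multidimensional Laplace asymptotics at a nondegenerate minimum.**
Let `V : ℝ^d → ℝ` be `C²` with unique global minimizer `m`, where the Hessian is positive
definite.  Assume `liminf_{|x|→∞} V(x) > V(m)`, that `inf_{|x−m|≥r} V(x) > V(m)` for every
`r > 0`, and `∫ e^{−V/a₀} dx < ∞` for some `a₀ > 0`.  Then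
`lim_{a↓0} (2πa)^{−d/2} ∫ e^{−(V(x)−V(m))/a} dx = (det ∇²V(m))^{−1/2}`. -/
theorem laplace_asymptotics
    {d : ℕ} (V : EuclideanSpace ℝ (Fin d) → ℝ) (hV : ContDiff ℝ 2 V)
    (m : EuclideanSpace ℝ (Fin d))
    (hmin : ∀ x, V m ≤ V x) (huniq : ∀ x, V x = V m → x = m)
    (hposdef : (hessianMatrix V m).PosDef)
    (hliminf : ∃ c : ℝ, V m < c ∧
      ∀ᶠ x in cocompact (EuclideanSpace ℝ (Fin d)), c ≤ V x)
    (hsep : ∀ r : ℝ, 0 < r → ∃ c : ℝ, V m < c ∧ ∀ x, r ≤ dist x m → c ≤ V x)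
    (a₀ : ℝ) (ha₀ : 0 < a₀)
    (hint : Integrable (fun x => Real.exp (-V x / a₀)) volume) :
    Tendsto
      (fun a : ℝ =>
        (2 * π * a) ^ (-(d : ℝ) / 2) * ∫ x, Real.exp (-(V x - V m) / a) ∂volume)
      (𝓝[>] 0)
      (𝓝 ((Real.sqrt (hessianMatrix V m).det)⁻¹)) := by
  have hV' : Differentiable ℝ (fderiv ℝ V) :=
    (hV.fderiv_right (m := 1) le_rfl).differentiable one_ne_zero
  have h := laplace_asymptotics_general (EuclideanSpace.basisFun (Fin d) ℝ).toBasis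
    (.of_forall fun x => (hV.differentiable two_ne_zero x).hasFDerivAt)
    (hV' m).hasFDerivAt (a₀ := a₀)
  rw [formMatrix_basisFun_fderiv_fderiv, OrthonormalBasis.addHaar_eq_volume, Fintype.card_fin] at h
  exact h hposdef hsep ha₀ hint
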